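/- On M = 𝕋^d × ℝ^d with ω = Σ dθ_j ∧ da_j, suppose a smooth family of symplectomorphisms φ^ε (φ^0 = id) admits two decompositions φ^ε = Φ^ε ∘ ψ^ε = Φ'^ε ∘ ψ'^ε, where Φ^ε, Φ'^ε are fiber-preserving families of symplectomorphisms (π∘Φ^ε = φ_B^ε∘π for some family of diffeomorphisms φ_B^ε of the base) and ψ^ε, ψ'^ε are Hamiltonian flows generated by time-dependent Hamiltonian vector fields X_{G_ε}, X_{G'_ε} with zero fiberwise averages ⟨G_ε⟩ = ⟨G'_ε⟩ = 0. Then Φ^ε = Φ'^ε and ψ^ε = ψ'^ε for all ε. -/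

import Mathlib

open MeasureTheory

/-- The standard symplectic form `ω = Σ dθ_j ∧ da_j` on `M = 𝕋^d × ℝ^d`. -/
def stdSymp (d : ℕ) (v w : (Fin d → ℝ) × (Fin d → ℝ)) : ℝ :=
  ∑ j, (v.1 j * w.2 j - w.1 j * v.2 j)

/-- The hypotheses on one decomposition `φ^ε = Φ^ε ∘ ψ^ε` of a family of symplectomorphisms of
`M = 𝕋^d × ℝ^d`: `Φ^ε` is a smooth family of fiber-preserving symplectomorphisms covering a
family `φB^ε` of diffeomorphisms of the base, and `ψ^ε` is the Hamiltonian flow of the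
time-dependent Hamiltonian vector field `XG_ε = -ω^{-1}(dG_ε)` of a family `G_ε` with zero
fiberwise average.  All maps commute with the deck transformations `θ ↦ θ + n`, `n ∈ ℤ^d`,
i.e. they descend to the torus. -/
def IsFlowDecomposition (d : ℕ)
    (φ Φ ψ : ℝ → ((Fin d → ℝ) × (Fin d → ℝ)) → ((Fin d → ℝ) × (Fin d → ℝ)))
    (φB : ℝ → (Fin d → ℝ) → (Fin d → ℝ))
    (G : ℝ → ((Fin d → ℝ) × (Fin d → ℝ)) → ℝ)
    (XG : ℝ → ((Fin d → ℝ) × (Fin d → ℝ)) → ((Fin d → ℝ) × (Fin d → ℝ))) : Prop :=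
  Φ 0 = id ∧ ψ 0 = id ∧
  ContDiff ℝ (⊤ : ℕ∞) (fun q : ℝ × ((Fin d → ℝ) × (Fin d → ℝ)) => Φ q.1 q.2) ∧
  ContDiff ℝ (⊤ : ℕ∞) (fun q : ℝ × ((Fin d → ℝ) × (Fin d → ℝ)) => ψ q.1 q.2) ∧
  ContDiff ℝ (⊤ : ℕ∞) (fun q : ℝ × ((Fin d → ℝ) × (Fin d → ℝ)) => G q.1 q.2) ∧
  (∀ ε : ℝ, Function.Bijective (Φ ε)) ∧ (∀ ε : ℝ, Function.Bijective (ψ ε)) ∧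
  -- equivariance under deck transformations (the maps descend to 𝕋^d × ℝ^d)
  (∀ (ε : ℝ) (θ a : Fin d → ℝ) (n : Fin d → ℤ),
    Φ ε (θ + (fun i => (n i : ℝ)), a) = Φ ε (θ, a) + ((fun i => (n i : ℝ)), 0)) ∧
  (∀ (ε : ℝ) (θ a : Fin d → ℝ) (n : Fin d → ℤ),
    ψ ε (θ + (fun i => (n i : ℝ)), a) = ψ ε (θ, a) + ((fun i => (n i : ℝ)), 0)) ∧
  (∀ (ε : ℝ) (θ a : Fin d → ℝ) (n : Fin d → ℤ),
    G ε (θ + (fun i => (n i : ℝ)), a) = G ε (θ, a)) ∧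
  -- Φ is fiber-preserving and symplectic
  (∀ (ε : ℝ) (p : (Fin d → ℝ) × (Fin d → ℝ)), (Φ ε p).2 = φB ε p.2) ∧
  (∀ (ε : ℝ) (p v w : (Fin d → ℝ) × (Fin d → ℝ)),
    stdSymp d (fderiv ℝ (Φ ε) p v) (fderiv ℝ (Φ ε) p w) = stdSymp d v w) ∧
  -- ψ is the flow of the Hamiltonian vector field XG_ε of G_ε, which has zero fiberwise average
  (∀ (ε : ℝ) (p v : (Fin d → ℝ) × (Fin d → ℝ)),
    stdSymp d (XG ε p) v = - fderiv ℝ (G ε) p v) ∧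
  (∀ (ε : ℝ) (m : (Fin d → ℝ) × (Fin d → ℝ)),
    HasDerivAt (fun e => ψ e m) (XG ε (ψ ε m)) ε) ∧
  (∀ (ε : ℝ) (p : (Fin d → ℝ) × (Fin d → ℝ)),
    (∫ t in Set.Icc (0 : Fin d → ℝ) 1, G ε (p.1 + t, p.2)) = 0) ∧
  -- the decomposition itself
  (∀ (ε : ℝ) (m : (Fin d → ℝ) × (Fin d → ℝ)), φ ε m = Φ ε (ψ ε m))


theorem affine_of_fderiv_const {E F : Type*} [NormedAddCommGroup E] [NormedSpace ℝ E]
    [NormedAddCommGroup F] [NormedSpace ℝ F] (f : E → F) (L : E →L[ℝ] F)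
    (hf : ∀ x, HasFDerivAt f L x) (x : E) : f x = f 0 + L x := by
  have h1 : ∀ x, HasFDerivAt (fun y => f y - L y) (0 : E →L[ℝ] F) x := by
    intro x
    have := (hf x).sub L.hasFDerivAt
    rwa [sub_self] at this
  have h2 := is_const_of_fderiv_eq_zero (𝕜 := ℝ) (f := fun y => f y - L y)
    (fun x => (h1 x).differentiableAt) (fun x => (h1 x).fderiv) x 0
  simp only [map_zero, sub_zero] at h2
  rw [← h2]; abel

theorem clm_ext_int {d : ℕ} {F : Type*} [NormedAddCommGroup F] [NormedSpace ℝ F]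
    (L M : (Fin d → ℝ) →L[ℝ] F)
    (h : ∀ n : Fin d → ℤ, L (fun i => (n i : ℝ)) = M (fun i => (n i : ℝ))) : L = M := by
  apply ContinuousLinearMap.coe_injective
  apply LinearMap.pi_ext'
  intro i
  apply LinearMap.ext_ring
  have := h (Pi.single i 1)
  have e : (fun j => (((Pi.single i 1 : Fin d → ℤ) j : ℤ) : ℝ)) = Pi.single i (1 : ℝ) := by
    funext j
    by_cases hj : j = i
    · subst hj; simp
    · simp [hj]
  rw [e] at this
  simpa using this

theorem dot_ext {d : ℕ} (x y : Fin d → ℝ) (h : ∀ v : Fin d → ℝ, ∑ j, x j * v j = ∑ j, y j * v j) :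
    x = y := by
  funext i
  simpa [Pi.single_apply] using h (Pi.single i 1)

theorem fiber_structure {d : ℕ} (F : ((Fin d → ℝ) × (Fin d → ℝ)) → ((Fin d → ℝ) × (Fin d → ℝ)))
    (fB : (Fin d → ℝ) → (Fin d → ℝ)) (hF : Differentiable ℝ F)
    (heq : ∀ (θ a : Fin d → ℝ) (n : Fin d → ℤ),
      F (θ + (fun i => (n i : ℝ)), a) = F (θ, a) + ((fun i => (n i : ℝ)), 0))
    (hfib : ∀ p, (F p).2 = fB p.2)
    (hs : ∀ p v w, stdSymp d (fderiv ℝ F p v) (fderiv ℝ F p w) = stdSymp d v w) (θ a : Fin d → ℝ) :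
    F (θ, a) = (θ + (F (0, a)).1, a + (F (0, 0)).2) := by
  -- partial derivatives
  have hA : ∀ θ a, HasFDerivAt (fun t : Fin d → ℝ => F (t, a))
      ((fderiv ℝ F (θ, a)).comp (ContinuousLinearMap.inl ℝ _ _)) θ := fun θ a =>
    (hF (θ, a)).hasFDerivAt.comp θ (hasFDerivAt_prodMk_left θ a)
  have hD : ∀ θ a, HasFDerivAt (fun t : Fin d → ℝ => F (θ, t))
      ((fderiv ℝ F (θ, a)).comp (ContinuousLinearMap.inr ℝ _ _)) a := fun θ a =>
    (hF (θ, a)).hasFDerivAt.comp a (hasFDerivAt_prodMk_right θ a)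
  have hA2 : ∀ θ a v, (fderiv ℝ F (θ, a) (v, 0)).2 = 0 := by
    intro θ a v
    have h1 := (hA θ a).snd
    have h2 : (fun t : Fin d → ℝ => (F (t, a)).2) = fun _ => fB a := by
      funext t; exact hfib _
    rw [h2] at h1
    have := h1.unique (hasFDerivAt_const (fB a) θ)
    simpa using DFunLike.congr_fun this v
  have hD2 : ∀ θ a w, (fderiv ℝ F (θ, a) (0, w)).2 = (fderiv ℝ F (0, a) (0, w)).2 := by
    intro θ a w
    have h1 := (hD θ a).snd
    have h3 := (hD 0 a).snd
    have h2 : (fun t : Fin d → ℝ => (F (θ, t)).2) = fun t => (F (0, t)).2 := by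
      funext t; rw [hfib, hfib]
    rw [h2] at h1
    have := h1.unique h3
    simpa using DFunLike.congr_fun this w
  have hdot : ∀ θ a v w, ∑ j, (fderiv ℝ F (θ, a) (v, 0)).1 j * (fderiv ℝ F (0, a) (0, w)).2 j
      = ∑ j, v j * w j := by
    intro θ a v w
    have := hs (θ, a) (v, 0) (0, w)
    simpa [stdSymp, hA2, hD2 θ a w] using this
  have hsurj : ∀ a, Function.Surjective (fun w => (fderiv ℝ F (0, a) (0, w)).2) := by
    intro a
    let D : (Fin d → ℝ) →ₗ[ℝ] (Fin d → ℝ) :=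
      ((ContinuousLinearMap.snd ℝ _ _).comp ((fderiv ℝ F (0, a)).comp
        (ContinuousLinearMap.inr ℝ (Fin d → ℝ) (Fin d → ℝ)))).toLinearMap
    have hDw : ∀ w, D w = (fderiv ℝ F (0, a) (0, w)).2 := fun w => by simp [D]
    have hinj : Function.Injective D := by
      rw [injective_iff_map_eq_zero]
      intro w hw
      apply dot_ext
      intro v
      have := hdot 0 a v w
      rw [← hDw, hw] at this
      simp only [Pi.zero_apply, mul_zero, Finset.sum_const_zero, zero_mul] at this ⊢
      rw [this]
      exact Finset.sum_congr rfl fun _ _ => mul_comm _ _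
    intro u
    obtain ⟨w, hw⟩ := LinearMap.surjective_of_injective hinj u
    exact ⟨w, by simpa [hDw] using hw⟩
  have hAconst : ∀ θ a v, (fderiv ℝ F (θ, a) (v, 0)).1 = (fderiv ℝ F (0, a) (v, 0)).1 := by
    intro θ a v
    apply dot_ext
    intro u
    obtain ⟨w, rfl⟩ := hsurj a u
    exact (hdot θ a v w).trans (hdot 0 a v w).symm
  have haff : ∀ a θ, (F (θ, a)).1 = (F (0, a)).1 + (fderiv ℝ F (0, a) (θ, 0)).1 := by
    intro a θ
    have := affine_of_fderiv_const (fun t : Fin d → ℝ => (F (t, a)).1)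
      ((ContinuousLinearMap.fst ℝ _ _).comp ((fderiv ℝ F (0, a)).comp
        (ContinuousLinearMap.inl ℝ (Fin d → ℝ) (Fin d → ℝ)))) (by
          intro t
          refine (hA t a).fst.congr_fderiv ?_
          ext1 v
          simpa using hAconst t a v) θ
    simpa using this
  have hAid : ∀ a v, (fderiv ℝ F (0, a) (v, 0)).1 = v := by
    intro a v
    have := clm_ext_int ((ContinuousLinearMap.fst ℝ _ _).comp ((fderiv ℝ F (0, a)).comp
        (ContinuousLinearMap.inl ℝ (Fin d → ℝ) (Fin d → ℝ)))) (ContinuousLinearMap.id ℝ _) (by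
      intro n
      have h1 := haff a (fun i => (n i : ℝ))
      have h2 := congrArg Prod.fst (heq 0 a n)
      rw [zero_add, h1] at h2
      simpa using h2)
    simpa using DFunLike.congr_fun this v
  have hDid : ∀ a w, (fderiv ℝ F (0, a) (0, w)).2 = w := by
    intro a w
    apply dot_ext
    intro v
    have := hdot 0 a v w
    rw [hAid] at this
    simpa [mul_comm] using this
  have h2 := affine_of_fderiv_const (fun t : Fin d → ℝ => (F (0, t)).2)
      (ContinuousLinearMap.id ℝ _) (by
          intro t
          refine (hD 0 t).snd.congr_fderiv ?_
          ext1 v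
          simpa using hDid t v) a
  apply Prod.ext
  · rw [haff, hAid]; exact add_comm _ _
  · have h3 : (F (θ, a)).2 = (F (0, a)).2 := by rw [hfib, hfib]
    rw [h3]; simpa [add_comm] using h2

theorem fiber_symm {d : ℕ} (F : ((Fin d → ℝ) × (Fin d → ℝ)) → ((Fin d → ℝ) × (Fin d → ℝ)))
    (c : (Fin d → ℝ) → (Fin d → ℝ)) (b : Fin d → ℝ) (a : Fin d → ℝ) (L : (Fin d → ℝ) →L[ℝ] (Fin d → ℝ))
    (hc : HasFDerivAt c L a)
    (hform : ∀ θ a, F (θ, a) = (θ + c a, a + b))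
    (hs : ∀ p v w, stdSymp d (fderiv ℝ F p v) (fderiv ℝ F p w) = stdSymp d v w)
    (v w : Fin d → ℝ) : ∑ j, L v j * w j = ∑ j, v j * L w j := by
  have e : F = fun p => (p.1 + c p.2, p.2 + b) := by
    funext p; exact hform p.1 p.2
  have hc' : HasFDerivAt (fun p : (Fin d → ℝ) × (Fin d → ℝ) => c p.2)
      (L.comp (ContinuousLinearMap.snd ℝ _ _)) (0, a) :=
    HasFDerivAt.comp (0, a) (f := fun p : (Fin d → ℝ) × (Fin d → ℝ) => p.2) hc hasFDerivAt_snd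
  have hd : HasFDerivAt F (((ContinuousLinearMap.fst ℝ _ _) + L.comp (ContinuousLinearMap.snd ℝ _ _)).prod
      (ContinuousLinearMap.snd ℝ (Fin d → ℝ) (Fin d → ℝ))) (0, a) := by
    rw [e]
    exact (hasFDerivAt_fst.add hc').prodMk (hasFDerivAt_snd.add_const b)
  have := hs (0, a) (0, v) (0, w)
  rw [hd.fderiv] at this
  simp [stdSymp, Finset.sum_sub_distrib] at this
  rw [sub_eq_zero] at this
  rw [this]
  exact Finset.sum_congr rfl fun _ _ => mul_comm _ _

/-- The fiberwise comparison: periodic functions with zero mean whose gradients differ by a constant. -/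
theorem periodic_compare {d : ℕ} (g g' : (Fin d → ℝ) → ℝ) (hg : Differentiable ℝ g)
    (hg' : Differentiable ℝ g') (L : (Fin d → ℝ) →L[ℝ] ℝ)
    (hp : ∀ (n : Fin d → ℤ), g (fun i => (n i : ℝ)) = g 0)
    (hp' : ∀ (n : Fin d → ℤ), g' (fun i => (n i : ℝ)) = g' 0)
    (hL : ∀ t, fderiv ℝ g t - fderiv ℝ g' t = L)
    (hi : ∫ t in Set.Icc (0 : Fin d → ℝ) 1, g t = 0)
    (hi' : ∫ t in Set.Icc (0 : Fin d → ℝ) 1, g' t = 0) : L = 0 ∧ g = g' := by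
  have haff := affine_of_fderiv_const (fun t => g t - g' t) L (fun t =>
    ((hg t).hasFDerivAt.sub (hg' t).hasFDerivAt).congr_fderiv (hL t))
  have hL0 : L = 0 := by
    apply clm_ext_int
    intro n
    have := haff (fun i => (n i : ℝ))
    simp only [hp, hp'] at this
    simpa using this
  refine ⟨hL0, ?_⟩
  have h1 : ∫ t in Set.Icc (0 : Fin d → ℝ) 1, (g t - g' t) = 0 := by
    rw [integral_sub, hi, hi', sub_zero]
    · exact hg.continuous.continuousOn.integrableOn_compact isCompact_Icc
    · exact hg'.continuous.continuousOn.integrableOn_compact isCompact_Icc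
  have hcst : (fun t => g t - g' t) = fun _ => g 0 - g' 0 := by
    funext t
    have := haff t
    rw [hL0] at this
    simpa using this
  rw [hcst] at h1
  simp [Measure.real, Real.volume_Icc_pi] at h1
  funext t
  have := haff t
  rw [hL0, h1] at this
  simpa [sub_eq_zero] using this

/-- Components of a Hamiltonian vector field. -/
theorem ham_components {d : ℕ} (X : (Fin d → ℝ) × (Fin d → ℝ))
    (L : ((Fin d → ℝ) × (Fin d → ℝ)) →L[ℝ] ℝ) (h : ∀ v, stdSymp d X v = - L v) (v : Fin d → ℝ) :
    L (v, 0) = ∑ j, X.2 j * v j ∧ L (0, v) = - ∑ j, X.1 j * v j := by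
  constructor
  · have := h (v, 0)
    simp [stdSymp] at this
    rw [← this]
    exact Finset.sum_congr rfl fun _ _ => mul_comm _ _
  · have := h (0, v)
    simp [stdSymp] at this
    rw [this, neg_neg]

theorem decomposition_facts {d : ℕ}
    {φ Φ ψ : ℝ → ((Fin d → ℝ) × (Fin d → ℝ)) → ((Fin d → ℝ) × (Fin d → ℝ))}
    {φB : ℝ → (Fin d → ℝ) → (Fin d → ℝ)}
    {G : ℝ → ((Fin d → ℝ) × (Fin d → ℝ)) → ℝ}
    {XG : ℝ → ((Fin d → ℝ) × (Fin d → ℝ)) → ((Fin d → ℝ) × (Fin d → ℝ))}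
    (h : IsFlowDecomposition d φ Φ ψ φB G XG) :
    ∃ (c ct : ℝ → (Fin d → ℝ) → (Fin d → ℝ)) (b bt : ℝ → (Fin d → ℝ))
      (L : ℝ → (Fin d → ℝ) → ((Fin d → ℝ) →L[ℝ] (Fin d → ℝ))),
      (∀ a, c 0 a = 0) ∧ b 0 = 0 ∧
      (∀ ε θ a, Φ ε (θ, a) = (θ + c ε a, a + b ε)) ∧
      (∀ ε, HasDerivAt b (bt ε) ε) ∧
      (∀ ε a, HasDerivAt (fun e => c e a) (ct ε a) ε) ∧
      (∀ ε a, HasFDerivAt (c ε) (L ε a) a) ∧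
      (∀ ε a v w, ∑ j, L ε a v j * w j = ∑ j, v j * L ε a w j) ∧
      (∀ ε m, HasDerivAt (fun e => φ e m)
        ((XG ε (ψ ε m)).1 + (ct ε (ψ ε m).2 + L ε (ψ ε m).2 (XG ε (ψ ε m)).2),
          (XG ε (ψ ε m)).2 + bt ε) ε) := by
  obtain ⟨hΦ0, hψ0, hΦs, hψs, hGs, hΦb, hψb, hΦe, hψe, hGe, hfib, hsym, hX, hflow, havg, hdec⟩ := h
  have hΦd : ∀ ε, Differentiable ℝ (Φ ε) := by
    intro ε
    have h1 : Differentiable ℝ (fun q : ℝ × ((Fin d → ℝ) × (Fin d → ℝ)) => Φ q.1 q.2) :=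
      hΦs.differentiable (by simp)
    exact h1.comp (f := fun p : (Fin d → ℝ) × (Fin d → ℝ) => (ε, p)) (by fun_prop)
  have hform : ∀ ε θ a, Φ ε (θ, a) = (θ + (Φ ε (0, a)).1, a + (Φ ε (0, 0)).2) := fun ε θ a =>
    fiber_structure (Φ ε) (φB ε) (hΦd ε) (hΦe ε) (hfib ε) (hsym ε) θ a
  have hC : Differentiable ℝ (fun q : ℝ × (Fin d → ℝ) => (Φ q.1 (0, q.2)).1) := by
    have h1 : Differentiable ℝ (fun q : ℝ × ((Fin d → ℝ) × (Fin d → ℝ)) => Φ q.1 q.2) :=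
      hΦs.differentiable (by simp)
    exact (h1.comp (f := fun q : ℝ × (Fin d → ℝ) => (q.1, ((0 : Fin d → ℝ), q.2)))
      (by fun_prop)).fst
  have hB : Differentiable ℝ (fun ε : ℝ => (Φ ε (0, 0)).2) := by
    have h1 : Differentiable ℝ (fun q : ℝ × ((Fin d → ℝ) × (Fin d → ℝ)) => Φ q.1 q.2) :=
      hΦs.differentiable (by simp)
    exact (h1.comp (f := fun q : ℝ => (q, ((0 : Fin d → ℝ), (0 : Fin d → ℝ))))
      (by fun_prop)).snd
  set C : ℝ × (Fin d → ℝ) → (Fin d → ℝ) := fun q => (Φ q.1 (0, q.2)).1 with hCdef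
  have hL : ∀ ε a, HasFDerivAt (fun a => (Φ ε (0, a)).1)
      ((fderiv ℝ C (ε, a)).comp (ContinuousLinearMap.inr ℝ ℝ (Fin d → ℝ))) a := fun ε a =>
    (hC (ε, a)).hasFDerivAt.comp a (hasFDerivAt_prodMk_right ε a)
  have hCcurve : ∀ ε (u : ℝ → (Fin d → ℝ)) (u' : Fin d → ℝ), HasDerivAt u u' ε →
      HasDerivAt (fun e => (Φ e (0, u e)).1) (fderiv ℝ C (ε, u ε) (1, u')) ε := by
    intro ε u u' hu
    exact HasFDerivAt.comp_hasDerivAt (f := fun e : ℝ => (e, u e)) ε (hC (ε, u ε)).hasFDerivAt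
      ((hasDerivAt_id ε).prodMk hu)
  refine ⟨fun ε a => (Φ ε (0, a)).1, fun ε a => fderiv ℝ C (ε, a) (1, 0), fun ε => (Φ ε (0, 0)).2,
    fun ε => deriv (fun ε : ℝ => (Φ ε (0, 0)).2) ε,
    fun ε a => (fderiv ℝ C (ε, a)).comp (ContinuousLinearMap.inr ℝ ℝ (Fin d → ℝ)),
    ?_, ?_, hform, ?_, ?_, hL, ?_, ?_⟩
  · intro a; simp [hΦ0]
  · simp [hΦ0]
  · intro ε; exact (hB ε).hasDerivAt
  · intro ε a; exact hCcurve ε (fun _ => a) 0 (hasDerivAt_const ε a)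
  · intro ε a v w
    exact fiber_symm (Φ ε) _ _ a _ (hL ε a) (hform ε) (hsym ε) v w
  · intro ε m
    have e : (fun e => φ e m) = fun e =>
        ((ψ e m).1 + (Φ e (0, (ψ e m).2)).1, (ψ e m).2 + (Φ e (0, 0)).2) := by
      funext e; rw [hdec, ← hform]
    rw [e]
    have h1 : HasDerivAt (fun e => (ψ e m).1) (XG ε (ψ ε m)).1 ε := (hflow ε m).fst
    have h2 : HasDerivAt (fun e => (ψ e m).2) (XG ε (ψ ε m)).2 ε := (hflow ε m).snd
    have h3 := (h1.add (hCcurve ε _ _ h2)).prodMk (h2.add (hB ε).hasDerivAt)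
    have e3 : fderiv ℝ C (ε, (ψ ε m).2) (1, 0) + ((fderiv ℝ C (ε, (ψ ε m).2)).comp
        (ContinuousLinearMap.inr ℝ ℝ (Fin d → ℝ))) (XG ε (ψ ε m)).2
        = fderiv ℝ C (ε, (ψ ε m).2) (1, (XG ε (ψ ε m)).2) := by
      rw [ContinuousLinearMap.comp_apply, ContinuousLinearMap.inr_apply, ← map_add]
      simp
    rw [← e3] at h3
    exact h3

theorem eq_of_deriv_eq {E : Type*} [NormedAddCommGroup E] [NormedSpace ℝ E]
    (f g f' : ℝ → E) (hf : ∀ x, HasDerivAt f (f' x) x) (hg : ∀ x, HasDerivAt g (f' x) x)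
    (h0 : f 0 = g 0) (x : ℝ) : f x = g x := by
  have h1 : ∀ x, HasDerivAt (fun x => f x - g x) 0 x := fun x => by
    have := (hf x).sub (hg x)
    rwa [sub_self] at this
  have h2 := is_const_of_deriv_eq_zero (f := fun x => f x - g x)
    (fun x => (h1 x).differentiableAt) (fun x => (h1 x).deriv) x 0
  simp only [h0, sub_self] at h2
  exact sub_eq_zero.mp h2

/-- On `M = 𝕋^d × ℝ^d` with `ω = Σ dθ_j ∧ da_j`, the decomposition of a smooth
family of symplectomorphisms `φ^ε` (with `φ^0 = id`) as `φ^ε = Φ^ε ∘ ψ^ε`, with `Φ^ε`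
fiber-preserving symplectomorphisms and `ψ^ε` a Hamiltonian flow generated by Hamiltonians of
zero fiberwise average, is unique: two such decompositions coincide. -/
theorem uniqueness_of_flow_decomposition
    (d : ℕ)
    (φ Φ Φ' ψ ψ' : ℝ → ((Fin d → ℝ) × (Fin d → ℝ)) → ((Fin d → ℝ) × (Fin d → ℝ)))
    (φB φB' : ℝ → (Fin d → ℝ) → (Fin d → ℝ))
    (G G' : ℝ → ((Fin d → ℝ) × (Fin d → ℝ)) → ℝ)
    (XG XG' : ℝ → ((Fin d → ℝ) × (Fin d → ℝ)) → ((Fin d → ℝ) × (Fin d → ℝ)))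
    (hφ0 : φ 0 = id)
    (h : IsFlowDecomposition d φ Φ ψ φB G XG)
    (h' : IsFlowDecomposition d φ Φ' ψ' φB' G' XG') :
    ∀ ε : ℝ, Φ ε = Φ' ε ∧ ψ ε = ψ' ε := by
  obtain ⟨c, ct, b, bt, L, hc0, hb0, hform, hbt, hct, hL, hLs, hder⟩ := decomposition_facts h
  obtain ⟨c', ct', b', bt', L', hc0', hb0', hform', hbt', hct', hL', hLs', hder'⟩ :=
    decomposition_facts h'
  obtain ⟨hΦ0, hψ0, hΦs, hψs, hGs, hΦb, hψb, hΦe, hψe, hGe, hfib, hsym, hX, hflow, havg, hdec⟩ := h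
  obtain ⟨hΦ0', hψ0', hΦs', hψs', hGs', hΦb', hψb', hΦe', hψe', hGe', hfib', hsym', hX', hflow',
    havg', hdec'⟩ := h'
  have hGd : ∀ ε, Differentiable ℝ (G ε) := by
    intro ε
    have h1 : Differentiable ℝ (fun q : ℝ × ((Fin d → ℝ) × (Fin d → ℝ)) => G q.1 q.2) :=
      hGs.differentiable (by simp)
    exact h1.comp (f := fun p : (Fin d → ℝ) × (Fin d → ℝ) => (ε, p)) (by fun_prop)
  have hGd' : ∀ ε, Differentiable ℝ (G' ε) := by
    intro ε
    have h1 : Differentiable ℝ (fun q : ℝ × ((Fin d → ℝ) × (Fin d → ℝ)) => G' q.1 q.2) :=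
      hGs'.differentiable (by simp)
    exact h1.comp (f := fun p : (Fin d → ℝ) × (Fin d → ℝ) => (ε, p)) (by fun_prop)
  -- comparison of the generators
  have key : ∀ ε θ a a' s, a' = a + b ε - b' ε → s = c ε a - c' ε a' →
      (XG ε (θ, a)).1 + (ct ε a + L ε a (XG ε (θ, a)).2)
        = (XG' ε (θ + s, a')).1 + (ct' ε a' + L' ε a' (XG' ε (θ + s, a')).2) ∧
      (XG ε (θ, a)).2 + bt ε = (XG' ε (θ + s, a')).2 + bt' ε := by
    intro ε θ a a' s ha' hs
    obtain ⟨m, hm⟩ := (hψb ε).2 (θ, a)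
    have hm' : ψ' ε m = (θ + s, a') := by
      have e : Φ ε (ψ ε m) = Φ' ε (ψ' ε m) := by rw [← hdec, ← hdec']
      apply (hΦb' ε).1
      rw [← e, hm, hform, hform', ha', hs, ha']
      apply Prod.ext
      · simp only []; abel
      · simp
    have h1 := hder ε m
    have h2 := hder' ε m
    rw [hm] at h1
    rw [hm'] at h2
    have h3 := h1.unique h2
    exact ⟨congrArg Prod.fst h3, congrArg Prod.snd h3⟩
  have hcmp : ∀ ε a a' s, a' = a + b ε - b' ε → s = c ε a - c' ε a' →
      bt ε = bt' ε ∧ ∀ θ, G ε (θ, a) = G' ε (θ + s, a') := by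
    intro ε a a' s ha' hs
    have hg : ∀ θ, HasFDerivAt (fun t : Fin d → ℝ => G ε (t, a))
        ((fderiv ℝ (G ε) (θ, a)).comp (ContinuousLinearMap.inl ℝ _ _)) θ := fun θ =>
      (hGd ε (θ, a)).hasFDerivAt.comp θ (hasFDerivAt_prodMk_left θ a)
    have hg' : ∀ θ, HasFDerivAt (fun t : Fin d → ℝ => G' ε (t + s, a'))
        ((fderiv ℝ (G' ε) (θ + s, a')).comp (ContinuousLinearMap.inl ℝ _ _)) θ := fun θ =>
      HasFDerivAt.comp (f := fun t : Fin d → ℝ => (t + s, a')) θ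
        (hGd' ε (θ + s, a')).hasFDerivAt
        (((hasFDerivAt_id θ).add_const s).prodMk (hasFDerivAt_const a' θ))
    have hdiff : ∀ θ v, (fderiv ℝ (fun t : Fin d → ℝ => G ε (t, a)) θ
        - fderiv ℝ (fun t : Fin d → ℝ => G' ε (t + s, a')) θ) v = ∑ j, (bt' ε - bt ε) j * v j := by
      intro θ v
      rw [(hg θ).fderiv, (hg' θ).fderiv]
      simp only [sub_apply, ContinuousLinearMap.comp_apply,
        ContinuousLinearMap.inl_apply]
      rw [(ham_components _ _ (hX ε (θ, a)) v).1, (ham_components _ _ (hX' ε (θ + s, a')) v).1,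
        ← Finset.sum_sub_distrib]
      refine Finset.sum_congr rfl fun j _ => ?_
      have := congrFun (key ε θ a a' s ha' hs).2 j
      simp only [Pi.add_apply, Pi.sub_apply] at this ⊢
      rw [← sub_mul]
      congr 1
      linarith
    have hpc := periodic_compare (fun t : Fin d → ℝ => G ε (t, a))
      (fun t : Fin d → ℝ => G' ε (t + s, a')) (fun θ => (hg θ).differentiableAt)
      (fun θ => (hg' θ).differentiableAt)
      (fderiv ℝ (fun t : Fin d → ℝ => G ε (t, a)) 0
        - fderiv ℝ (fun t : Fin d → ℝ => G' ε (t + s, a')) 0)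
      (by intro n; simpa using hGe ε 0 a n)
      (by intro n; simpa [add_comm] using hGe' ε s a' n)
      (by
        intro t
        apply ContinuousLinearMap.ext
        intro v
        rw [hdiff, hdiff])
      (by simpa using havg ε (0, a))
      (by simpa [add_comm] using havg' ε (s, a'))
    constructor
    · have : bt' ε - bt ε = 0 := by
        apply dot_ext
        intro v
        rw [← hdiff 0 v, hpc.1]
        simp
      exact (sub_eq_zero.mp this).symm
    · intro θ
      exact congrFun hpc.2 θ
  have hbteq : ∀ ε, bt ε = bt' ε := fun ε => (hcmp ε 0 _ _ rfl rfl).1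
  have hbeq : ∀ ε, b ε = b' ε := fun ε =>
    eq_of_deriv_eq b b' bt hbt (fun x => by rw [hbteq]; exact hbt' x) (by rw [hb0, hb0']) ε
  have hGeq : ∀ ε θ a, G ε (θ, a) = G' ε (θ + (c ε a - c' ε a), a) := fun ε θ a =>
    (hcmp ε a a _ (by rw [hbeq]; simp) rfl).2 θ
  have hcteq : ∀ ε a, ct ε a = ct' ε a := by
    intro ε a
    apply dot_ext
    intro v
    obtain ⟨k1, k2⟩ := key ε 0 a a _ (by rw [hbeq]; simp) rfl
    rw [hbteq, add_left_inj] at k2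
    -- differentiate the identity between the Hamiltonians in the base direction
    have d1 : HasFDerivAt (fun t : Fin d → ℝ => G ε (0, t))
        ((fderiv ℝ (G ε) (0, a)).comp (ContinuousLinearMap.inr ℝ _ _)) a :=
      (hGd ε (0, a)).hasFDerivAt.comp a (hasFDerivAt_prodMk_right 0 a)
    have d2 : HasFDerivAt (fun t : Fin d → ℝ => G' ε (0 + (c ε t - c' ε t), t))
        ((fderiv ℝ (G' ε) (0 + (c ε a - c' ε a), a)).comp
          ((L ε a - L' ε a).prod (ContinuousLinearMap.id ℝ _))) a :=
      HasFDerivAt.comp (f := fun t : Fin d → ℝ => (0 + (c ε t - c' ε t), t)) a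
        (hGd' ε _).hasFDerivAt
        ((((hL ε a).sub (hL' ε a)).const_add 0).prodMk (hasFDerivAt_id a))
    have e : (fun t : Fin d → ℝ => G ε (0, t))
        = fun t : Fin d → ℝ => G' ε (0 + (c ε t - c' ε t), t) := by
      funext t; exact hGeq ε 0 t
    rw [e] at d1
    have d3 := DFunLike.congr_fun (d1.unique d2) v
    simp only [ContinuousLinearMap.comp_apply, ContinuousLinearMap.inr_apply,
      ContinuousLinearMap.prod_apply, ContinuousLinearMap.id_apply,
      sub_apply] at d3
    rw [(ham_components _ _ (hX ε (0, a)) v).2] at d3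
    have e2 : ((L ε a v - L' ε a v, v) : (Fin d → ℝ) × (Fin d → ℝ))
        = (L ε a v - L' ε a v, 0) + (0, v) := by simp
    rw [e2, map_add, (ham_components _ _ (hX' ε _) v).2, (ham_components _ _ (hX' ε _) _).1,
      ← k2] at d3
    rw [← k2] at k1
    have s1 := hLs ε a (XG ε (0, a)).2 v
    have s2 := hLs' ε a (XG ε (0, a)).2 v
    have k3 : ∑ j, ((XG ε (0, a)).1 + (ct ε a + L ε a (XG ε (0, a)).2)) j * v j
        = ∑ j, ((XG' ε (0 + (c ε a - c' ε a), a)).1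
          + (ct' ε a + L' ε a (XG ε (0, a)).2)) j * v j := by rw [k1]
    simp only [Pi.add_apply, add_mul, Finset.sum_add_distrib] at k3
    simp only [Pi.sub_apply, mul_sub, Finset.sum_sub_distrib] at d3
    linarith
  have hceq : ∀ ε a, c ε a = c' ε a := fun ε a =>
    eq_of_deriv_eq (fun e => c e a) (fun e => c' e a) (fun e => ct e a) (fun x => hct x a)
      (fun x => by rw [hcteq]; exact hct' x a) (by simp only [hc0, hc0']) ε
  intro ε
  have hΦeq : Φ ε = Φ' ε := by
    funext p
    obtain ⟨θ, a⟩ := p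
    rw [hform, hform', hceq, hbeq]
  refine ⟨hΦeq, ?_⟩
  funext m
  apply (hΦb ε).1
  rw [← hdec, hΦeq, ← hdec']
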